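/- Let I be a monomial ideal in a polynomial ring R over a field and let m ∈ R be a monomial with m ∉ I. If R/I is Cohen-Macaulay, then R/(I : m) is Cohen-Macaulay. -/

import Mathlib

open MvPolynomial

/-- A simplicial complex on the vertex set `V`, presented by its set of facets
(the maximal faces).  Every facet is nonempty and no facet contains another. -/
structure SimplicialComplexOn (V : Type) [Fintype V] [DecidableEq V] : Type where
  facets : Finset (Finset V)
  nonempty_facet : ∀ F ∈ facets, F.Nonempty
  antichain : ∀ F ∈ facets, ∀ G ∈ facets, F ⊆ G → F = G

variable {V : Type} [Fintype V] [DecidableEq V]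

/-- `F` is a leaf of the collection of facets `S`: either `F` is the only facet, or
there is a facet `G ≠ F` (a joint) with `F ∩ H ⊆ F ∩ G` for every facet `H ≠ F`. -/
def IsLeafOf (S : Finset (Finset V)) (F : Finset V) : Prop :=
  F ∈ S ∧ ((∀ H ∈ S, H = F) ∨
    ∃ G ∈ S, G ≠ F ∧ ∀ H ∈ S, H ≠ F → F ∩ H ⊆ F ∩ G)

/-- The forest property for a facet collection: every nonempty subcollection
(i.e. every nonempty subcomplex) has a leaf. -/
def HasLeafProp (S : Finset (Finset V)) : Prop :=
  ∀ T ⊆ S, T.Nonempty → ∃ F, IsLeafOf T F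

/-- A good leaf: a facet which is a leaf of every subcomplex containing it. -/
def IsGoodLeafOf (S : Finset (Finset V)) (F : Finset V) : Prop :=
  F ∈ S ∧ ∀ T ⊆ S, F ∈ T → IsLeafOf T F

/-- A special leaf: a leaf `F` such that for all facets `H, H' ≠ F`,
`H ∩ H' ≠ ∅` iff `(H ∩ H') \ F ≠ ∅`. -/
def IsSpecialLeafOf (S : Finset (Finset V)) (F : Finset V) : Prop :=
  IsLeafOf S F ∧ ∀ H ∈ S, ∀ H' ∈ S, H ≠ F → H' ≠ F →
    ((H ∩ H').Nonempty ↔ ((H ∩ H') \ F).Nonempty)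

/-- A matching: a subcollection of the facets that is pairwise disjoint. -/
def IsMatchingOf (S : Finset (Finset V)) (M : Finset (Finset V)) : Prop :=
  M ⊆ S ∧ ∀ F ∈ M, ∀ G ∈ M, F ≠ G → F ∩ G = ∅

/-- The matching number: maximum size of a matching. -/
noncomputable def matchingNumberOf (S : Finset (Finset V)) : ℕ :=
  sSup {n | ∃ M : Finset (Finset V), IsMatchingOf S M ∧ M.card = n}

/-- The facet collection `S` is grafted: it decomposes as `Fs ∪ Gs` where
(1) every vertex of a `G ∈ Gs` lies in some `F ∈ Fs`, (2) `Fs` is exactly the set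
of leaves of `S`, (3) `Fs` and `Gs` are disjoint, (4) the members of `Fs` are
pairwise disjoint, and (5) for each `G ∈ Gs`, deleting the facet `G` leaves a
grafted collection. -/
inductive IsGrafted : Finset (Finset V) → Prop where
  | intro (S Fs Gs : Finset (Finset V))
      (hunion : S = Fs ∪ Gs)
      (hdisj : Disjoint Fs Gs)
      (hcover : ∀ G ∈ Gs, ∀ v ∈ G, ∃ F ∈ Fs, v ∈ F)
      (hleaves : ∀ F, IsLeafOf S F ↔ F ∈ Fs)
      (hFdisj : ∀ F ∈ Fs, ∀ F' ∈ Fs, F ≠ F' → F ∩ F' = ∅)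
      (hrec : ∀ G ∈ Gs, IsGrafted (S.erase G)) :
      IsGrafted S

/-- `S` is the (minimal presentation of the) grafting of the collection `Gs`
with the simplices `Fs`. -/
def IsGraftingDecomp (S Fs Gs : Finset (Finset V)) : Prop :=
  S = Fs ∪ Gs ∧ Disjoint Fs Gs ∧
  (∀ G ∈ Gs, ∀ v ∈ G, ∃ F ∈ Fs, v ∈ F) ∧
  (∀ F, IsLeafOf S F ↔ F ∈ Fs) ∧
  (∀ F ∈ Fs, ∀ F' ∈ Fs, F ≠ F' → F ∩ F' = ∅) ∧
  (∀ G ∈ Gs, IsGrafted (S.erase G))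

/-- A Cohen-Macaulay simplicial forest, combinatorially: a grafted simplicial forest. -/
def IsCMForestFacets (S : Finset (Finset V)) : Prop :=
  HasLeafProp S ∧ IsGrafted S

/-- The closed neighborhood `N[F] = {F} ∪ {G ∈ S : G ≠ F, G ∩ F ≠ ∅}`. -/
def closedNbhd (S : Finset (Finset V)) (F : Finset V) : Finset (Finset V) :=
  insert F (S.filter fun G => G ≠ F ∧ (G ∩ F).Nonempty)

/-- The contraction of the facet collection `S` on `A`: the minimal members of
`{F \ A : F ∈ S}`. -/
def contraction (S : Finset (Finset V)) (A : Finset V) : Finset (Finset V) :=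
  (S.image fun F => F \ A).filter fun F' => ∀ G ∈ S, G \ A ⊆ F' → G \ A = F'

variable (K : Type) [Field K]

/-- The square-free monomial `x_S = ∏_{v ∈ S} x_v`. -/
noncomputable def xMon (S : Finset V) : MvPolynomial V K := ∏ v ∈ S, X v

/-- The facet ideal `I(Δ) = ⟨x_F : F a facet⟩`. -/
noncomputable def facetIdealOf (S : Finset (Finset V)) : Ideal (MvPolynomial V K) :=
  Ideal.span { p | ∃ F ∈ S, p = xMon K F }

/-- The `k`-th square-free power of an ideal: the ideal generated by all
square-free monomials lying in `I ^ k`. -/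
noncomputable def sqfreePow (I : Ideal (MvPolynomial V K)) (k : ℕ) :
    Ideal (MvPolynomial V K) :=
  Ideal.span { p | (∃ S : Finset V, p = xMon K S) ∧ p ∈ I ^ k }

/-- The depth of `R/I` with respect to the homogeneous maximal ideal
`m = ⟨x_v : v ∈ V⟩`: the largest length of an `R/I`-regular sequence of
elements of `m`. -/
noncomputable def gradedDepth (I : Ideal (MvPolynomial V K)) : ℕ :=
  sSup {n | ∃ rs : List (MvPolynomial V K), rs.length = n ∧
    (∀ r ∈ rs, r ∈ Ideal.span (Set.range (X : V → MvPolynomial V K))) ∧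
    RingTheory.Sequence.IsRegular (MvPolynomial V K ⧸ I) rs}

/-- `R/I` is Cohen-Macaulay: its depth equals its Krull dimension. -/
def IsCMQuot (I : Ideal (MvPolynomial V K)) : Prop :=
  ((gradedDepth K I : ℕ∞) : WithBot ℕ∞) = ringKrullDim (MvPolynomial V K ⧸ I)

section Statements

variable {V : Type} [Fintype V] [DecidableEq V] (K : Type) [Field K]

/-- A monomial ideal: an ideal generated by monomials. -/
def IsMonomialIdeal (I : Ideal (MvPolynomial V K)) : Prop :=
  ∃ S : Set (V →₀ ℕ), I = Ideal.span ((fun s => monomial s (1 : K)) '' S)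

/-
Depth is read off the Koszul cohomology of the variables: `R/I` has a weakly regular sequence of
length `t` in the ideal of variables iff its Koszul cohomology vanishes in degrees below `t`.
Since `dim R/(I : m) ≤ dim R/I`, it suffices that this vanishing passes from `R/I` to
`R/(I : m)`, and one may take `m = x_v`. Multiplication by `x_v` embeds `R/(I : x_v)` into `R/I`
by a map `j`, and because `I` is monomial, division by `x_v` is an additive retraction `ρ` of `j`.
It commutes with all variables but `x_v`; with the projection `g : R/I → R/(I : x_v)`, `π = 1 - jρ`
and `ε` the coordinate of `x_v`, one gets `ρ(db) = d(ρb) + g(ε ∧ πb)`. For a cocycle `c` on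
`R/(I : x_v)` write `jc = db`. Then `ε ∧ πb` is a cocycle because `π(db) = πjc = 0`, hence
`ε ∧ πb = db'`, and `c = ρjc = d(ρb + gb')`.
-/

section Wedge

open AlternatingMap

variable {A E M N N' P : Type*} [CommRing A] [AddCommGroup E] [Module A E]
  [AddCommGroup M] [Module A M] [AddCommGroup N] [Module A N] [AddCommGroup N'] [Module A N']
  [AddCommGroup P] [Module A P] {n : ℕ}

/-- The exterior product `ψ ∧ ω` of an operator-valued 1-form `ψ` with an alternating form `ω`,
normalized as a sum over the `n + 1` choices of the argument passed to `ψ`. -/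
def wedge (ψ : E →ₗ[A] M →ₗ[A] N) (ω : E [⋀^Fin n]→ₗ[A] M) : E [⋀^Fin (n + 1)]→ₗ[A] N :=
  alternatizeUncurryFin
    { toFun e := (ψ e).compAlternatingMap ω
      map_add' _ _ := by ext; simp
      map_smul' _ _ := by ext; simp }

lemma wedge_apply (ψ : E →ₗ[A] M →ₗ[A] N) (ω : E [⋀^Fin n]→ₗ[A] M) (v : Fin (n + 1) → E) :
    wedge ψ ω v = ∑ i : Fin (n + 1), (-1) ^ (i : ℕ) • ψ (v i) (ω (i.removeNth v)) := by
  simp [wedge, alternatizeUncurryFin_apply]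

lemma wedge_add (ψ : E →ₗ[A] M →ₗ[A] N) (ω ω' : E [⋀^Fin n]→ₗ[A] M) :
    wedge ψ (ω + ω') = wedge ψ ω + wedge ψ ω' := by
  ext v
  simp [wedge_apply, Finset.sum_add_distrib]

lemma compAlternatingMap_wedge (f : N →ₗ[A] P) (ψ : E →ₗ[A] M →ₗ[A] N)
    (ω : E [⋀^Fin n]→ₗ[A] M) :
    f.compAlternatingMap (wedge ψ ω) = wedge (f.compRight A ∘ₗ ψ) ω := by
  ext v
  simp [wedge_apply]

lemma curryLeft_wedge (ψ : E →ₗ[A] M →ₗ[A] N) (ω : E [⋀^Fin (n + 1)]→ₗ[A] M) (e : E) :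
    (wedge ψ ω).curryLeft e = (ψ e).compAlternatingMap ω - wedge ψ (ω.curryLeft e) := by
  ext v
  rw [AlternatingMap.sub_apply, curryLeft_apply_apply, wedge_apply, Fin.sum_univ_succ,
    LinearMap.compAlternatingMap_apply, wedge_apply, sub_eq_add_neg, ← Finset.sum_neg_distrib]
  congr 1
  · simp [Matrix.vecCons]
  · refine Finset.sum_congr rfl fun i _ ↦ ?_
    have hremove : i.succ.removeNth (Matrix.vecCons e v) = Matrix.vecCons e (i.removeNth v) := by
      ext j
      refine j.cases ?_ fun j ↦ ?_ <;> simp [Fin.removeNth]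
    rw [hremove, Matrix.cons_val_succ, Fin.val_succ, pow_succ, mul_neg_one, neg_smul,
      curryLeft_apply_apply]

lemma wedge_wedge_add_wedge_wedge_eq_zero {ψ : E →ₗ[A] N →ₗ[A] P} {χ : E →ₗ[A] M →ₗ[A] N}
    {ψ' : E →ₗ[A] N' →ₗ[A] P} {χ' : E →ₗ[A] M →ₗ[A] N'}
    (hsymm : ∀ x y m, ψ x (χ y m) + ψ' x (χ' y m) = ψ y (χ x m) + ψ' y (χ' x m))
    (ω : E [⋀^Fin n]→ₗ[A] M) : wedge ψ (wedge χ ω) + wedge ψ' (wedge χ' ω) = 0 := by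
  let f : E →ₗ[A] E →ₗ[A] E [⋀^Fin n]→ₗ[A] P :=
    LinearMap.mk₂ A (fun x y ↦ (ψ x ∘ₗ χ y + ψ' x ∘ₗ χ' y).compAlternatingMap ω)
      (fun _ _ _ ↦ by ext; simp [add_add_add_comm]) (fun _ _ _ ↦ by ext; simp)
      (fun _ _ _ ↦ by ext; simp [add_add_add_comm]) (fun _ _ _ ↦ by ext; simp)
  have hf : ∀ x y, f x y = f y x := fun x y ↦ by ext v; exact hsymm x y (ω v)
  rw [← alternatizeUncurryFin_alternatizeUncurryFinLM_comp_of_symmetric hf]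
  ext v
  simp [wedge_apply, alternatizeUncurryFin_apply, f, Finset.sum_add_distrib, Finset.smul_sum]

lemma wedge_wedge_eq_zero {ψ : E →ₗ[A] N →ₗ[A] P} {χ : E →ₗ[A] M →ₗ[A] N}
    (hsymm : ∀ x y m, ψ x (χ y m) = ψ y (χ x m)) (ω : E [⋀^Fin n]→ₗ[A] M) :
    wedge ψ (wedge χ ω) = 0 := by
  have hzero : wedge (0 : E →ₗ[A] N →ₗ[A] P) (wedge χ ω) = 0 := by ext; simp [wedge_apply]
  rw [← wedge_wedge_add_wedge_wedge_eq_zero (ψ' := (0 : E →ₗ[A] N →ₗ[A] P)) (χ' := χ)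
    (by simpa using hsymm) ω, hzero, add_zero]

end Wedge

section Koszul

open scoped Pointwise

variable {R E M N : Type*} [CommRing R] [AddCommGroup E] [AddCommGroup M] [Module R M]
  [AddCommGroup N] [Module R N] {n t : ℕ}

/-- The operator-valued 1-form `e ↦ φ e • ·` on `M`, exterior multiplication by which is the Koszul
differential. -/
def smulForm (φ : E →ₗ[ℤ] R) (M : Type*) [AddCommGroup M] [Module R M] :
    E →ₗ[ℤ] M →ₗ[ℤ] M :=
  (Algebra.lsmul ℤ ℤ M).toLinearMap ∘ₗ φ

@[simp]
lemma smulForm_apply (φ : E →ₗ[ℤ] R) (e : E) (m : M) : smulForm φ M e m = φ e • m := rfl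

/-- The differential of the Koszul cochain complex with coefficients in `M`. The `n`-cochains are
the alternating maps `Eⁿ → M` for a lattice `E` of indeterminates mapped to `R` by `φ`; they are
only required to be additive, so that additive maps of coefficients act on them. -/
def koszulD (φ : E →ₗ[ℤ] R) : E [⋀^Fin n]→ₗ[ℤ] M →ₗ[R] E [⋀^Fin (n + 1)]→ₗ[ℤ] M where
  toFun := wedge (smulForm φ M)
  map_add' := wedge_add _
  map_smul' r c := by
    ext v
    simp [wedge_apply, Finset.smul_sum, smul_comm r]

/-- The Koszul coboundaries of degree `n`, which vanish in degree `0`. -/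
def koszulBoundaries (φ : E →ₗ[ℤ] R) (M : Type*) [AddCommGroup M] [Module R M] :
    ∀ n, Submodule R (E [⋀^Fin n]→ₗ[ℤ] M)
  | 0 => ⊥
  | _ + 1 => LinearMap.range (koszulD φ)

/-- The Koszul cohomology of `M` vanishes in all degrees `n < t`. -/
def KoszulVanishesBelow (φ : E →ₗ[ℤ] R) (M : Type*) [AddCommGroup M] [Module R M] (t : ℕ) : Prop :=
  ∀ n < t, LinearMap.ker (koszulD φ) ≤ koszulBoundaries φ M n

/-- The map of Koszul cochains induced by a linear map of coefficients. -/
def koszulMap (f : M →ₗ[R] N) : E [⋀^Fin n]→ₗ[ℤ] M →ₗ[R] E [⋀^Fin n]→ₗ[ℤ] N where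
  toFun := (f.restrictScalars ℤ).compAlternatingMap
  map_add' _ _ := by ext; simp
  map_smul' _ _ := by ext; simp

/-- The projection `M → M / rM`. -/
abbrev quotSMulMk (r : R) (M : Type*) [AddCommGroup M] [Module R M] : M →ₗ[R] QuotSMulTop r M :=
  (r • (⊤ : Submodule R M)).mkQ

variable {φ : E →ₗ[ℤ] R}

@[simp]
lemma koszulMap_apply (f : M →ₗ[R] N) (c : E [⋀^Fin n]→ₗ[ℤ] M) (v : Fin n → E) :
    koszulMap f c v = f (c v) := rfl

lemma koszulD_koszulD (c : E [⋀^Fin n]→ₗ[ℤ] M) : koszulD φ (koszulD φ c) = 0 :=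
  wedge_wedge_eq_zero (fun x y m ↦ smul_comm (φ x) (φ y) m) c

lemma koszulD_koszulMap (f : M →ₗ[R] N) (c : E [⋀^Fin n]→ₗ[ℤ] M) :
    koszulD φ (koszulMap f c) = koszulMap f (koszulD φ c) := by
  ext v
  simp [koszulD, wedge_apply]

lemma koszulD_mem_koszulBoundaries (c : E [⋀^Fin n]→ₗ[ℤ] M) :
    koszulD φ c ∈ koszulBoundaries φ M (n + 1) :=
  LinearMap.mem_range_self _ c

lemma koszulBoundaries_le_ker : koszulBoundaries φ M n ≤ LinearMap.ker (koszulD φ) := by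
  cases n with
  | zero => exact bot_le
  | succ n =>
    rintro _ ⟨b, rfl⟩
    exact koszulD_koszulD b

lemma koszulMap_mem_koszulBoundaries (f : M →ₗ[R] N) {c : E [⋀^Fin n]→ₗ[ℤ] M}
    (hc : c ∈ koszulBoundaries φ M n) : koszulMap f c ∈ koszulBoundaries φ N n := by
  cases n with
  | zero =>
    obtain rfl : c = 0 := hc
    exact map_zero _
  | succ n =>
    obtain ⟨b, rfl⟩ := hc
    rw [← koszulD_koszulMap]
    exact koszulD_mem_koszulBoundaries _

lemma smul_mem_koszulBoundaries {r : R} (hr : r ∈ Ideal.span (Set.range φ))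
    {c : E [⋀^Fin n]→ₗ[ℤ] M} (hc : koszulD φ c = 0) : r • c ∈ koszulBoundaries φ M n := by
  suffices hle : Ideal.span (Set.range φ) ≤ (koszulBoundaries φ M n).comap
      (LinearMap.toSpanSingleton R _ c) from hle hr
  rw [Ideal.span_le]
  rintro _ ⟨e, rfl⟩
  cases n with
  | zero =>
    ext v
    have he : φ e • c (Fin.removeNth 0 fun _ ↦ e) = 0 := by
      simpa [koszulD, wedge_apply] using congr($hc fun _ ↦ e)
    simpa [Subsingleton.elim v (Fin.removeNth 0 fun _ ↦ e)] using he
  | succ n =>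
    refine ⟨c.curryLeft e, ?_⟩
    have h := curryLeft_wedge (smulForm φ M) c e
    rw [show wedge (smulForm φ M) c = 0 from hc] at h
    exact (sub_eq_zero.1 h.symm).symm

lemma koszulMap_quotSMulMk_smul (r : R) (c : E [⋀^Fin n]→ₗ[ℤ] M) :
    koszulMap (quotSMulMk r M) (r • c) = 0 := by
  ext v
  exact (Submodule.Quotient.mk_eq_zero _).2
    (Submodule.smul_mem_pointwise_smul _ r _ Submodule.mem_top)

lemma isSMulRegular_alternatingMap {r : R} (hr : IsSMulRegular M r) :
    IsSMulRegular (E [⋀^Fin n]→ₗ[ℤ] M) r :=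
  fun _ _ hbc ↦ AlternatingMap.ext fun v ↦ hr congr($hbc v)

lemma KoszulVanishesBelow.eq_zero_of_forall_smul_eq_zero (h : KoszulVanishesBelow φ M (t + 1))
    {m : M} (hm : ∀ e, φ e • m = 0) : m = 0 := by
  have hclosed : koszulD φ (AlternatingMap.constOfIsEmpty ℤ E (Fin 0) m) = 0 := by
    ext v
    simp [koszulD, wedge_apply, hm]
  have hzero : AlternatingMap.constOfIsEmpty ℤ E (Fin 0) m = 0 := h 0 t.succ_pos hclosed
  exact congr($hzero 0)

lemma KoszulVanishesBelow.exists_isSMulRegular [IsNoetherianRing R] [Module.Finite R M]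
    (h : KoszulVanishesBelow φ M (t + 1)) :
    ∃ r ∈ Ideal.span (Set.range φ), IsSMulRegular M r := by
  have hsub : Subsingleton ((R ⧸ Ideal.span (Set.range φ)) →ₗ[R] M) := by
    refine subsingleton_of_forall_eq 0 fun f ↦ Submodule.linearMap_qext _ (LinearMap.ext_ring ?_)
    refine h.eq_zero_of_forall_smul_eq_zero fun e ↦ ?_
    have he : φ e • (Ideal.span (Set.range φ)).mkQ 1 = 0 := by
      rw [← map_smul, smul_eq_mul, mul_one]
      exact (Submodule.Quotient.mk_eq_zero _).2 (Ideal.subset_span ⟨e, rfl⟩)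
    rw [LinearMap.comp_apply, ← map_smul, he, map_zero]
  rwa [IsSMulRegular.subsingleton_linearMap_iff, Ideal.annihilator_quotient] at hsub

variable [Module.Free ℤ E]

lemma koszulMap_surjective {f : M →ₗ[R] N} (hf : Function.Surjective f) :
    Function.Surjective (koszulMap (E := E) (n := n) f) := by
  intro c
  obtain ⟨l, hl⟩ := Module.projective_lifting_property (f.restrictScalars ℤ)
    (exteriorPower.alternatingMapLinearEquiv c) hf
  refine ⟨exteriorPower.alternatingMapLinearEquiv.symm l, ?_⟩
  rw [← exteriorPower.alternatingMapLinearEquiv.symm_apply_apply c, ← hl]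
  ext v
  simp

lemma exists_mem_koszulBoundaries_koszulMap_eq {f : M →ₗ[R] N} (hf : Function.Surjective f)
    {c : E [⋀^Fin n]→ₗ[ℤ] N} (hc : c ∈ koszulBoundaries φ N n) :
    ∃ b ∈ koszulBoundaries φ M n, koszulMap f b = c := by
  cases n with
  | zero => exact ⟨0, zero_mem _, (map_zero _).trans (Eq.symm hc)⟩
  | succ n =>
    obtain ⟨a, rfl⟩ := hc
    obtain ⟨b, rfl⟩ := koszulMap_surjective hf a
    exact ⟨koszulD φ b, koszulD_mem_koszulBoundaries b, (koszulD_koszulMap f b).symm⟩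

lemma exists_smul_eq_of_koszulMap_quotSMulMk_eq_zero {r : R} {c : E [⋀^Fin n]→ₗ[ℤ] M}
    (hc : koszulMap (quotSMulMk r M) c = 0) : ∃ b, r • b = c := by
  have hrange : ∀ v, c v ∈ LinearMap.range (LinearMap.lsmul R M r) := fun v ↦ by
    have hv : c v ∈ r • (⊤ : Submodule R M) :=
      (Submodule.Quotient.mk_eq_zero _).1 congr($hc v)
    obtain ⟨m, -, hm⟩ := Submodule.mem_smul_pointwise_iff_exists _ _ _ |>.1 hv
    exact ⟨m, hm⟩
  obtain ⟨b, hb⟩ := koszulMap_surjective (LinearMap.lsmul R M r).surjective_rangeRestrict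
    (c.codRestrict ((LinearMap.range (LinearMap.lsmul R M r)).restrictScalars ℤ) hrange)
  refine ⟨b, ?_⟩
  ext v
  exact congr(($hb v : M))

lemma KoszulVanishesBelow.quotSMulTop {r : R} (hr : IsSMulRegular M r)
    (h : KoszulVanishesBelow φ M (t + 1)) : KoszulVanishesBelow φ (QuotSMulTop r M) t := by
  intro n hn c' hc'
  obtain ⟨c, rfl⟩ := koszulMap_surjective (f := quotSMulMk r M) (Submodule.mkQ_surjective _) c'
  obtain ⟨ω, hω⟩ : ∃ ω, r • ω = koszulD φ c :=
    exists_smul_eq_of_koszulMap_quotSMulMk_eq_zero (by rw [← koszulD_koszulMap]; exact hc')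
  have hω_closed : koszulD φ ω = 0 := by
    refine isSMulRegular_alternatingMap hr ?_
    change r • koszulD φ ω = r • 0
    rw [smul_zero, ← map_smul, hω, koszulD_koszulD]
  obtain ⟨b, rfl⟩ := h (n + 1) (by omega) hω_closed
  have hcb : c - r • b ∈ koszulBoundaries φ M n :=
    h n (by omega) (by simp [hω])
  have hmap : koszulMap (quotSMulMk r M) (c - r • b) = koszulMap (quotSMulMk r M) c := by
    rw [map_sub, koszulMap_quotSMulMk_smul, sub_zero]
  exact hmap ▸ koszulMap_mem_koszulBoundaries _ hcb

lemma KoszulVanishesBelow.of_quotSMulTop {r : R} (hφ : r ∈ Ideal.span (Set.range φ))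
    (hr : IsSMulRegular M r) (h : KoszulVanishesBelow φ (QuotSMulTop r M) t) :
    KoszulVanishesBelow φ M (t + 1) := by
  intro n hn c hc
  have hrc := smul_mem_koszulBoundaries hφ hc
  cases n with
  | zero => exact isSMulRegular_alternatingMap hr (Eq.trans hrc (smul_zero r).symm)
  | succ n =>
    obtain ⟨b, hb⟩ := hrc
    have hclosed : koszulD φ (koszulMap (quotSMulMk r M) b) = 0 := by
      rw [koszulD_koszulMap, hb, koszulMap_quotSMulMk_smul]
    obtain ⟨b', hb', hbb'⟩ := exists_mem_koszulBoundaries_koszulMap_eq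
      (f := quotSMulMk r M) (Submodule.mkQ_surjective _) (h n (by omega) hclosed)
    obtain ⟨a, ha⟩ : ∃ a, r • a = b - b' :=
      exists_smul_eq_of_koszulMap_quotSMulMk_eq_zero (by rw [map_sub, hbb', sub_self])
    have hb'_closed : koszulD φ b' = 0 := koszulBoundaries_le_ker hb'
    refine ⟨a, isSMulRegular_alternatingMap hr ?_⟩
    change r • koszulD φ a = r • c
    rw [← map_smul, ha, map_sub, hb, hb'_closed, sub_zero]

lemma KoszulVanishesBelow.of_isWeaklyRegular {rs : List R}
    (hφ : ∀ r ∈ rs, r ∈ Ideal.span (Set.range φ))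
    (hrs : RingTheory.Sequence.IsWeaklyRegular M rs) : KoszulVanishesBelow φ M rs.length := by
  induction rs generalizing M with
  | nil => exact fun n hn ↦ absurd hn n.not_lt_zero
  | cons r rs ih =>
    obtain ⟨hr, hrs⟩ := (RingTheory.Sequence.isWeaklyRegular_cons_iff M r rs).1 hrs
    rw [List.forall_mem_cons] at hφ
    exact .of_quotSMulTop hφ.1 hr (ih hφ.2 hrs)

lemma KoszulVanishesBelow.exists_isWeaklyRegular [IsNoetherianRing R] [Module.Finite R M]
    (h : KoszulVanishesBelow φ M t) :
    ∃ rs : List R, rs.length = t ∧ (∀ r ∈ rs, r ∈ Ideal.span (Set.range φ)) ∧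
      RingTheory.Sequence.IsWeaklyRegular M rs := by
  induction t generalizing M with
  | zero => exact ⟨[], rfl, by simp, .nil R M⟩
  | succ t ih =>
    obtain ⟨r, hφ, hr⟩ := h.exists_isSMulRegular
    obtain ⟨rs, hlen, hrs, hreg⟩ := ih (h.quotSMulTop hr)
    exact ⟨r :: rs, by simp [hlen], List.forall_mem_cons.2 ⟨hφ, hrs⟩, .cons hr hreg⟩

end Koszul

section AdditiveSplitting

variable {R E M N D : Type*} [CommRing R] [AddCommGroup E] [AddCommGroup M] [Module R M]
  [AddCommGroup N] [Module R N] [AddCommGroup D] [Module R D] {n t : ℕ} {φ : E →ₗ[ℤ] R}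
  {ε : E →ₗ[ℤ] ℤ}

lemma compAlternatingMap_koszulD {ρ τ : M →ₗ[ℤ] N}
    (hρ : ∀ e m, ρ (φ e • m) = φ e • ρ m + ε e • τ m) (b : E [⋀^Fin n]→ₗ[ℤ] M) :
    ρ.compAlternatingMap (koszulD φ b) =
      koszulD φ (ρ.compAlternatingMap b) + wedge (ε.smulRight τ) b := by
  ext v
  simp [koszulD, wedge_apply, hρ, smul_add, Finset.sum_add_distrib]

lemma koszulD_wedge_smulRight {ρ τ : M →ₗ[ℤ] N}
    (hρ : ∀ e m, ρ (φ e • m) = φ e • ρ m + ε e • τ m) (b : E [⋀^Fin n]→ₗ[ℤ] M) :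
    koszulD φ (wedge (ε.smulRight ρ) b) =
      -wedge (ε.smulRight LinearMap.id) (ρ.compAlternatingMap (koszulD φ b)) := by
  have hswap : wedge (smulForm φ N) (wedge (ε.smulRight ρ) b) +
      wedge (ε.smulRight LinearMap.id) (wedge (ρ.compRight ℤ ∘ₗ smulForm φ M) b) = 0 := by
    refine wedge_wedge_add_wedge_wedge_eq_zero (fun x y m ↦ ?_) b
    simp only [smulForm_apply, LinearMap.smulRight_apply, LinearMap.smul_apply,
      LinearMap.comp_apply, LinearMap.compRight_apply, LinearMap.id_apply, hρ, smul_add,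
      smul_comm (φ _) (ε _), smul_comm (ε y) (ε x)]
    abel
  rw [← compAlternatingMap_wedge] at hswap
  exact eq_neg_of_add_eq_zero_left hswap

/-- The additive endomorphism `m ↦ m - j (ρ m)`; when `ρ` is a retraction of `j`, it is the
projection onto the complement `ker ρ` of the image of `j`. -/
def complProj (j : D →ₗ[R] M) (ρ : M →ₗ[ℤ] D) : M →ₗ[ℤ] M :=
  LinearMap.id - j.restrictScalars ℤ ∘ₗ ρ

lemma complProj_apply (j : D →ₗ[R] M) (ρ : M →ₗ[ℤ] D) (m : M) : complProj j ρ m = m - j (ρ m) :=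
  rfl

lemma complProj_smul {j : D →ₗ[R] M} {ρ : M →ₗ[ℤ] D} {g : M →ₗ[R] D}
    (hρ : ∀ e m, ρ (φ e • m) = φ e • ρ m + ε e • g (complProj j ρ m)) (e : E) (m : M) :
    complProj j ρ (φ e • m) = φ e • complProj j ρ m +
      ε e • (-((j ∘ₗ g).restrictScalars ℤ ∘ₗ complProj j ρ)) m := by
  rw [complProj_apply, hρ, map_add, map_smul, map_zsmul, complProj_apply, smul_sub,
    LinearMap.neg_apply, smul_neg]
  exact (sub_add_eq_sub_sub _ _ _).trans (sub_eq_add_neg _ _)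

lemma koszulD_wedge_smulRight_complProj {j : D →ₗ[R] M} {ρ : M →ₗ[ℤ] D}
    (hρj : Function.LeftInverse ρ j) {g : M →ₗ[R] D}
    (hρ : ∀ e m, ρ (φ e • m) = φ e • ρ m + ε e • g (complProj j ρ m))
    {b : E [⋀^Fin n]→ₗ[ℤ] M} {c : E [⋀^Fin (n + 1)]→ₗ[ℤ] D} (hb : koszulD φ b = koszulMap j c) :
    koszulD φ (wedge (ε.smulRight (complProj j ρ)) b) = 0 := by
  have hproj : (complProj j ρ).compAlternatingMap (koszulD φ b) = 0 := by
    rw [hb]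
    ext v
    simp [complProj_apply, hρj (c v)]
  rw [koszulD_wedge_smulRight (complProj_smul hρ), hproj]
  ext v
  simp [wedge_apply]

lemma KoszulVanishesBelow.of_additive_leftInverse {j : D →ₗ[R] M} {ρ : M →ₗ[ℤ] D}
    (hρj : Function.LeftInverse ρ j) {g : M →ₗ[R] D}
    (hρ : ∀ e m, ρ (φ e • m) = φ e • ρ m + ε e • g (complProj j ρ m))
    (h : KoszulVanishesBelow φ M t) : KoszulVanishesBelow φ D t := by
  intro n hn c hc
  have hjc : koszulMap j c ∈ koszulBoundaries φ M n :=
    h n hn (by rw [LinearMap.mem_ker, koszulD_koszulMap, LinearMap.mem_ker.1 hc, map_zero])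
  have hρjc : ρ.compAlternatingMap (koszulMap j c) = c := AlternatingMap.ext fun v ↦ hρj (c v)
  cases n with
  | zero =>
    have hjc_zero : koszulMap j c = 0 := hjc
    rw [← hρjc, hjc_zero]
    exact AlternatingMap.ext fun _ ↦ map_zero ρ
  | succ n =>
    obtain ⟨b, hb⟩ := hjc
    obtain ⟨b', hb'⟩ : wedge (ε.smulRight (complProj j ρ)) b ∈ koszulBoundaries φ M (n + 1) :=
      h (n + 1) hn (koszulD_wedge_smulRight_complProj hρj hρ hb)
    refine ⟨ρ.compAlternatingMap b + koszulMap g b', ?_⟩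
    calc koszulD φ (ρ.compAlternatingMap b + koszulMap g b')
        = koszulD φ (ρ.compAlternatingMap b) +
            koszulMap g (wedge (ε.smulRight (complProj j ρ)) b) := by
          rw [map_add, koszulD_koszulMap, hb']
      _ = koszulD φ (ρ.compAlternatingMap b) +
            wedge (ε.smulRight (g.restrictScalars ℤ ∘ₗ complProj j ρ)) b := by
          congr 1
          ext v
          simp [wedge_apply]
      _ = ρ.compAlternatingMap (koszulD φ b) := (compAlternatingMap_koszulD hρ b).symm
      _ = c := by rw [hb, hρjc]

end AdditiveSplitting

section Colon

variable {R : Type*} [CommRing R]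

lemma mem_colon_span_singleton {I : Ideal R} {f m : R} :
    f ∈ I.colon (Ideal.span {m}) ↔ f * m ∈ I := by
  rw [Ideal.colon_span, Submodule.mem_colon_singleton, smul_eq_mul]

lemma le_colon_span_singleton (I : Ideal R) (a : R) : I ≤ I.colon (Ideal.span {a}) :=
  fun _ hf ↦ mem_colon_span_singleton.2 (I.mul_mem_right _ hf)

lemma colon_colon_span_singleton (I : Ideal R) (a b : R) :
    (I.colon (Ideal.span {a})).colon (Ideal.span {b}) = I.colon (Ideal.span {a * b}) := by
  ext f
  rw [mem_colon_span_singleton, mem_colon_span_singleton, mem_colon_span_singleton, mul_assoc,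
    mul_comm b a]

end Colon

section DivMonomial

variable {σ k : Type*} [CommRing k]

lemma X_mul_divMonomial_single_of_ne {v w : σ} (hwv : w ≠ v) (f : MvPolynomial σ k) :
    (X w * f).divMonomial (Finsupp.single v 1) = X w * f.divMonomial (Finsupp.single v 1) := by
  classical
  ext s
  simp only [coeff_divMonomial, coeff_X_mul', Finsupp.mem_support_iff, Finsupp.add_apply,
    Finsupp.single_eq_of_ne hwv, zero_add]
  split_ifs with hs
  · rw [add_tsub_assoc_of_le (Finsupp.single_le_iff.2 (Nat.one_le_iff_ne_zero.2 hs))]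
  · rfl

lemma X_mul_divMonomial_single_eq_add [DecidableEq σ] (v w : σ) (f : MvPolynomial σ k) :
    (X w * f).divMonomial (Finsupp.single v 1) = X w * f.divMonomial (Finsupp.single v 1) +
      if w = v then f - X v * f.divMonomial (Finsupp.single v 1) else 0 := by
  split_ifs with hwv
  · rw [hwv, X_mul_divMonomial, add_sub_cancel]
  · rw [X_mul_divMonomial_single_of_ne hwv, add_zero]

end DivMonomial

section MonomialIdeals

variable {V : Type} {K : Type} [Field K] {I : Ideal (MvPolynomial V K)}

lemma isMonomialIdeal_iff :
    IsMonomialIdeal K I ↔ ∀ f ∈ I, ∀ s ∈ f.support, monomial s (1 : K) ∈ I := by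
  constructor
  · rintro ⟨S, rfl⟩ f hf s hs
    rw [mem_ideal_span_monomial_image] at hf ⊢
    intro s' hs'
    rw [Finset.mem_singleton.1 (support_monomial_subset hs')]
    exact hf s hs
  · intro h
    refine ⟨{s | monomial s (1 : K) ∈ I}, le_antisymm (fun f hf ↦ ?_) ?_⟩
    · exact mem_ideal_span_monomial_image.2 fun s hs ↦ ⟨s, h f hf s hs, le_rfl⟩
    · rw [Ideal.span_le]
      rintro _ ⟨s, hs, rfl⟩
      exact hs

lemma IsMonomialIdeal.colon_monomial (hI : IsMonomialIdeal K I) (s : V →₀ ℕ) :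
    IsMonomialIdeal K (I.colon (Ideal.span {monomial s (1 : K)})) := by
  rw [isMonomialIdeal_iff] at hI ⊢
  intro f hf u hu
  rw [mem_colon_span_singleton] at hf ⊢
  rw [monomial_mul, one_mul]
  refine hI _ hf _ ?_
  rwa [mem_support_iff, coeff_mul_monomial, mul_one, ← mem_support_iff]

lemma IsMonomialIdeal.divMonomial_mem_colon (hI : IsMonomialIdeal K I) {f : MvPolynomial V K}
    (hf : f ∈ I) (s : V →₀ ℕ) :
    f.divMonomial s ∈ I.colon (Ideal.span {monomial s (1 : K)}) := by
  rw [mem_colon_span_singleton, (f.divMonomial s).as_sum, Finset.sum_mul]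
  refine Ideal.sum_mem _ fun u hu ↦ ?_
  have hmem : monomial (s + u) (1 : K) ∈ I := by
    refine isMonomialIdeal_iff.1 hI f hf _ ?_
    rwa [mem_support_iff, ← coeff_divMonomial, ← mem_support_iff]
  rw [monomial_mul, mul_one, add_comm, ← mul_one (coeff u _), ← C_mul_monomial]
  exact I.mul_mem_left _ hmem

lemma IsMonomialIdeal.le_idealOfVars (hI : IsMonomialIdeal K I) (hI' : I ≠ ⊤) :
    I ≤ idealOfVars V K := by
  intro f hf
  rw [← pow_one (idealOfVars V K), mem_pow_idealOfVars_iff]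
  intro s hs
  rw [Nat.one_le_iff_ne_zero, Ne, Finsupp.degree_eq_zero_iff]
  rintro rfl
  exact hI' (I.eq_top_of_isUnit_mem (isMonomialIdeal_iff.1 hI f hf 0 hs) isUnit_one)

/-- The variables as a `ℤ`-linear map: the datum defining the Koszul complex of the ideal of
variables. -/
noncomputable def varsMap (σ k : Type*) [CommRing k] : (σ →₀ ℤ) →ₗ[ℤ] MvPolynomial σ k :=
  Finsupp.linearCombination ℤ X

lemma span_range_varsMap (σ k : Type*) [CommRing k] :
    Ideal.span (Set.range (varsMap σ k)) = idealOfVars σ k := by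
  have hrange : Set.range (varsMap σ k) =
      (Submodule.span ℤ (Set.range X) : Submodule ℤ (MvPolynomial σ k)) := by
    rw [← Finsupp.range_linearCombination]
    rfl
  rw [hrange]
  exact Submodule.span_span_of_tower ℤ _ _

/-- Division by the variable `v`, discarding the monomials not divisible by it, as a map
`R/I → R/(I : X v)`. -/
noncomputable def divXQuot (hI : IsMonomialIdeal K I) (v : V) :
    (MvPolynomial V K ⧸ I) →ₗ[ℤ]
      MvPolynomial V K ⧸ I.colon (Ideal.span {(X v : MvPolynomial V K)}) :=
  (QuotientAddGroup.map I.toAddSubgroup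
    (I.colon (Ideal.span {(X v : MvPolynomial V K)})).toAddSubgroup
    (AddMonoidHom.mk' (fun f ↦ f.divMonomial (Finsupp.single v 1)) fun f g ↦ add_divMonomial f g _)
    fun _ hf ↦ hI.divMonomial_mem_colon hf _).toIntLinearMap

/-- Multiplication by the variable `v` as a map `R/(I : X v) → R/I`. -/
noncomputable def mulXQuot (I : Ideal (MvPolynomial V K)) (v : V) :
    (MvPolynomial V K ⧸ I.colon (Ideal.span {(X v : MvPolynomial V K)})) →ₗ[MvPolynomial V K]
      MvPolynomial V K ⧸ I :=
  Submodule.mapQ _ _ (LinearMap.mulRight _ (X v)) fun _ hf ↦ mem_colon_span_singleton.1 hf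

lemma divXQuot_leftInverse (hI : IsMonomialIdeal K I) (v : V) :
    Function.LeftInverse (divXQuot hI v) (mulXQuot I v) := by
  intro x
  obtain ⟨f, rfl⟩ := Ideal.Quotient.mk_surjective x
  exact congrArg (Ideal.Quotient.mk _) (mul_X_divMonomial f v)

lemma divXQuot_X_smul [DecidableEq V] (hI : IsMonomialIdeal K I) (v w : V)
    (x : MvPolynomial V K ⧸ I) :
    divXQuot hI v ((X w : MvPolynomial V K) • x) = (X w : MvPolynomial V K) • divXQuot hI v x +
      if w = v then Submodule.factor (le_colon_span_singleton I (X v))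
        (complProj (mulXQuot I v) (divXQuot hI v) x) else 0 := by
  obtain ⟨f, rfl⟩ := Ideal.Quotient.mk_surjective x
  refine (congrArg (Ideal.Quotient.mk _) (X_mul_divMonomial_single_eq_add v w f)).trans ?_
  rw [map_add, apply_ite (Ideal.Quotient.mk _), mul_comm (X v), map_zero]
  rfl

lemma divXQuot_varsMap_smul (hI : IsMonomialIdeal K I) (v : V) (e : V →₀ ℤ)
    (x : MvPolynomial V K ⧸ I) :
    divXQuot hI v (varsMap V K e • x) = varsMap V K e • divXQuot hI v x +
      e v • Submodule.factor (le_colon_span_singleton I (X v))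
        (complProj (mulXQuot I v) (divXQuot hI v) x) := by
  classical
  induction e using Finsupp.induction_linear with
  | zero => simp
  | add e e' he he' =>
    simp only [map_add, add_smul, Finsupp.add_apply, he, he']
    abel
  | single w a =>
    rw [varsMap, Finsupp.linearCombination_single, smul_assoc, map_zsmul, divXQuot_X_smul,
      smul_add, smul_assoc, Finsupp.single_apply]
    split_ifs <;> simp

lemma KoszulVanishesBelow.colon_X (hI : IsMonomialIdeal K I) (v : V) {t : ℕ}
    (h : KoszulVanishesBelow (varsMap V K) (MvPolynomial V K ⧸ I) t) :
    KoszulVanishesBelow (varsMap V K)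
      (MvPolynomial V K ⧸ I.colon (Ideal.span {(X v : MvPolynomial V K)})) t :=
  h.of_additive_leftInverse (ε := Finsupp.lapply v) (divXQuot_leftInverse hI v)
    (divXQuot_varsMap_smul hI v)

lemma KoszulVanishesBelow.colon_monomial (hI : IsMonomialIdeal K I) (s : V →₀ ℕ) {t : ℕ}
    (h : KoszulVanishesBelow (varsMap V K) (MvPolynomial V K ⧸ I) t) :
    KoszulVanishesBelow (varsMap V K)
      (MvPolynomial V K ⧸ I.colon (Ideal.span {monomial s (1 : K)})) t := by
  classical
  obtain ⟨u, rfl⟩ := Multiset.toFinsupp.surjective s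
  induction u using Multiset.induction_on generalizing I with
  | empty =>
    have hcolon :
        I.colon (Ideal.span {monomial (Multiset.toFinsupp (0 : Multiset V)) (1 : K)}) = I := by
      ext f
      rw [mem_colon_span_singleton, map_zero, monomial_zero', C_1, mul_one]
    rwa [hcolon]
  | cons v u ih =>
    have hcons : monomial (Multiset.toFinsupp (v ::ₘ u)) (1 : K) =
        X v * monomial (Multiset.toFinsupp u) 1 := by
      rw [← Multiset.singleton_add, map_add, Multiset.toFinsupp_singleton, X, monomial_mul, one_mul]
    rw [hcons, ← colon_colon_span_singleton]
    exact ih (hI.colon_monomial _) (h.colon_X hI v)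

end MonomialIdeals

section Depth

open RingTheory.Sequence

lemma length_le_supportDim {R M : Type*} [CommRing R] [AddCommGroup M] [Module R M]
    [Module.Finite R M] {rs : List R} (hrs : IsRegular M rs) :
    ((rs.length : ℕ∞) : WithBot ℕ∞) ≤ Module.supportDim R M := by
  induction rs generalizing M with
  | nil =>
    have := hrs.nontrivial
    obtain ⟨d, hd⟩ := WithBot.ne_bot_iff_exists.1 (Module.supportDim_ne_bot_of_nontrivial R M)
    rw [← hd]
    exact WithBot.coe_le_coe.2 (by simp)
  | cons r rs ih =>
    obtain ⟨hr, hrs⟩ := (isRegular_cons_iff M r rs).1 hrs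
    calc (((r :: rs).length : ℕ∞) : WithBot ℕ∞)
        = ((rs.length : ℕ∞) : WithBot ℕ∞) + 1 := by simp
      _ ≤ Module.supportDim R (QuotSMulTop r M) + 1 := by gcongr; exact ih hrs
      _ ≤ Module.supportDim R M :=
        Module.supportDim_quotSMulTop_succ_le_of_notMem_minimalPrimes
          fun _ ↦ hr.notMem_of_mem_minimalPrimes

lemma length_le_ringKrullDim_quotient {R : Type*} [CommRing R] {J : Ideal R} {rs : List R}
    (hrs : IsRegular (R ⧸ J) rs) :
    ((rs.length : ℕ∞) : WithBot ℕ∞) ≤ ringKrullDim (R ⧸ J) :=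
  Module.supportDim_quotient_eq_ringKrullDim J ▸ length_le_supportDim hrs

lemma isRegular_quotient_of_isWeaklyRegular {R : Type*} [CommRing R] {J P : Ideal R} (hJP : J ≤ P)
    (hP : P ≠ ⊤) {rs : List R} (hrsP : ∀ r ∈ rs, r ∈ P) (hrs : IsWeaklyRegular (R ⧸ J) rs) :
    IsRegular (R ⧸ J) rs := by
  refine ⟨hrs, fun htop ↦ hP ?_⟩
  have hle : Ideal.ofList rs • (⊤ : Submodule R (R ⧸ J)) ≤ Submodule.map (Submodule.mkQ J) P := by
    refine Submodule.smul_le.2 fun r hr x _ ↦ ?_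
    obtain ⟨y, rfl⟩ := Submodule.mkQ_surjective J x
    exact ⟨r * y, P.mul_mem_right _ (Ideal.span_le.2 hrsP hr), rfl⟩
  have hmap : Submodule.map (Submodule.mkQ J) P = ⊤ := top_le_iff.1 (htop.trans_le hle)
  rwa [Submodule.map_mkQ_eq_top, sup_eq_right.2 hJP] at hmap

lemma idealOfVars_ne_top (σ k : Type*) [CommRing k] [Nontrivial k] : idealOfVars σ k ≠ ⊤ := by
  rw [Ideal.ne_top_iff_one, ← pow_one (idealOfVars σ k), ← C_1, C_mem_pow_idealOfVars_iff]
  simp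

variable {V : Type} {K : Type} [Field K] {J : Ideal (MvPolynomial V K)}

lemma isCMQuot_iff (hJ : J ≠ ⊤) :
    IsCMQuot K J ↔ ∃ rs : List (MvPolynomial V K), (∀ r ∈ rs, r ∈ idealOfVars V K) ∧
      IsRegular (MvPolynomial V K ⧸ J) rs ∧
      ((rs.length : ℕ∞) : WithBot ℕ∞) = ringKrullDim (MvPolynomial V K ⧸ J) := by
  constructor
  · intro h
    have : Nontrivial (MvPolynomial V K ⧸ J) := Ideal.Quotient.nontrivial_iff.2 hJ
    obtain ⟨rs, hlen, hrs, hreg⟩ := Nat.sSup_mem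
      (s := {n | ∃ rs : List (MvPolynomial V K), rs.length = n ∧
        (∀ r ∈ rs, r ∈ idealOfVars V K) ∧ IsRegular (MvPolynomial V K ⧸ J) rs})
      ⟨0, [], rfl, by simp, .nil _ _⟩ ⟨gradedDepth K J, by
        rintro _ ⟨rs, rfl, -, hreg⟩
        exact_mod_cast (length_le_ringKrullDim_quotient hreg).trans_eq (Eq.symm h)⟩
    exact ⟨rs, hrs, hreg, hlen ▸ h⟩
  · rintro ⟨rs, hrs, hreg, hdim⟩
    refine Eq.trans ?_ hdim
    have hgreatest : IsGreatest {n | ∃ rs : List (MvPolynomial V K), rs.length = n ∧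
        (∀ r ∈ rs, r ∈ idealOfVars V K) ∧ IsRegular (MvPolynomial V K ⧸ J) rs} rs.length := by
      refine ⟨⟨rs, rfl, hrs, hreg⟩, ?_⟩
      rintro _ ⟨rs', rfl, -, hreg'⟩
      exact_mod_cast (length_le_ringKrullDim_quotient hreg').trans_eq hdim.symm
    exact congrArg (fun n : ℕ ↦ ((n : ℕ∞) : WithBot ℕ∞)) hgreatest.csSup_eq

end Depth

theorem stmt11 (I : Ideal (MvPolynomial V K)) (hI : IsMonomialIdeal K I)
    (m : MvPolynomial V K) (hm : ∃ s : V →₀ ℕ, m = monomial s (1 : K)) (hmI : m ∉ I)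
    (hCM : IsCMQuot K I) :
    IsCMQuot K (I.colon (Ideal.span {m})) := by
  obtain ⟨s, rfl⟩ := hm
  have hI_ne : I ≠ ⊤ := fun h ↦ hmI (h ▸ Submodule.mem_top)
  have hJ_ne : I.colon (Ideal.span {monomial s (1 : K)}) ≠ ⊤ := by
    rwa [Ideal.ne_top_iff_one, mem_colon_span_singleton, one_mul]
  obtain ⟨rs, hrs, hreg, hdim⟩ := (isCMQuot_iff hI_ne).1 hCM
  rw [← span_range_varsMap] at hrs
  have hvanish := (KoszulVanishesBelow.of_isWeaklyRegular hrs hreg.toIsWeaklyRegular).colon_monomial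
    hI s
  obtain ⟨rs', hlen, hrs', hweak⟩ := hvanish.exists_isWeaklyRegular
  rw [span_range_varsMap] at hrs'
  have hreg' := isRegular_quotient_of_isWeaklyRegular
    ((hI.colon_monomial s).le_idealOfVars hJ_ne) (idealOfVars_ne_top V K) hrs' hweak
  refine (isCMQuot_iff hJ_ne).2
    ⟨rs', hrs', hreg', (length_le_ringKrullDim_quotient hreg').antisymm ?_⟩
  rw [hlen, hdim]
  have hIJ := le_colon_span_singleton I (monomial s (1 : K))
  exact ringKrullDim_le_of_surjective _ (Ideal.Quotient.factor_surjective hIJ)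

end Statements
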